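/- Let D be a category and C ⊆ D a full subcategory (given by a fully faithful functor ι : C ⥤ D). Call a presheaf P : Dᵒᵖ ⥤ Type 'left Kan extended from C' if P, equipped with the identity natural transformation on its restriction ι.op ⋙ P, is a left Kan extension of ι.op ⋙ P along ι.op. Let F ⟶ G ⟵ H be natural transformations of presheaves on D. Assume: (1) H is left Kan extended from C, and (2) for every object U of C and every natural transformation from the representable presheaf y(ιU) to G, the pullback F ×_G y(ιU), computed in the presheaf category, is left Kan extended from C. Then the pullback F ×_G H is left Kan extended from C. -/

import Mathlib

open CategoryTheory CategoryTheory.Limits Opposite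

universe v u₁ u₂

namespace CategoryTheory.Presheaf

variable {C : Type u₁} {D : Type u₂} [Category.{v} C] [Category.{v} D]

/-- A predicate on triples `(c, u : d ⟶ ι c, q ∈ P (ι c))` is compatible if it factors through
the coend computing the value at `d` of the left Kan extension of `ι.op ⋙ P` along `ι.op`. -/
def IsCompatible (ι : C ⥤ D) (P : Dᵒᵖ ⥤ Type v) {d : D}
    (φ : ∀ c : C, (d ⟶ ι.obj c) → P.obj (op (ι.obj c)) → Prop) : Prop :=
  ∀ ⦃c c' : C⦄ (a : c ⟶ c') (u : d ⟶ ι.obj c) (q : P.obj (op (ι.obj c'))),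
    φ c u (P.map (ι.map a).op q) ↔ φ c' (u ≫ ι.map a) q

/-- Elementwise form of the condition that `P` is left Kan extended along `ι`: the comparison map
from the coend `∫^c (d ⟶ ι c) × P (ι c)` to `P d` is bijective, where equality in the coend is
tested by compatible predicates. -/
structure IsExtendedFrom (ι : C ⥤ D) (P : Dᵒᵖ ⥤ Type v) : Prop where
  exists_map_eq (d : D) (p : P.obj (op d)) :
    ∃ (c : C) (u : d ⟶ ι.obj c) (q : P.obj (op (ι.obj c))), P.map u.op q = p
  of_map_eq {d : D} {φ : ∀ c : C, (d ⟶ ι.obj c) → P.obj (op (ι.obj c)) → Prop}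
    (hφ : IsCompatible ι P φ) {c c' : C} {u : d ⟶ ι.obj c} {u' : d ⟶ ι.obj c'}
    {q : P.obj (op (ι.obj c))} {q' : P.obj (op (ι.obj c'))}
    (hq : P.map u.op q = P.map u'.op q') (h : φ c u q) : φ c' u' q'

/-- The presheaf of predicates on morphisms out of `d`. -/
def predHom (d : D) : Dᵒᵖ ⥤ Type v where
  obj d' := (d ⟶ d'.unop) → Prop
  map a := ↾fun s v ↦ s (v ≫ a.unop)
  map_id _ := by ext; simp
  map_comp _ _ := by ext; simp

lemma IsExtendedFrom.of_isLeftKanExtension (ι : C ⥤ D) (P : Dᵒᵖ ⥤ Type v)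
    [P.IsLeftKanExtension (𝟙 (ι.op ⋙ P))] : IsExtendedFrom ι P where
  exists_map_eq d p := by
    let γ₁ : P ⟶ predHom d :=
      { app := fun d' ↦ ↾fun _ _ ↦ True
        naturality := fun _ _ _ ↦ by ext; simp [predHom] }
    let γ₂ : P ⟶ predHom d :=
      { app := fun d' ↦ ↾fun p v ↦ ∃ (c : C) (u : d ⟶ ι.obj c) (q : P.obj (op (ι.obj c))),
          P.map u.op q = P.map v.op p
        naturality := fun _ _ _ ↦ by ext; simp [predHom] }
    have hγ : γ₁ = γ₂ := by
      refine P.hom_ext_of_isLeftKanExtension (𝟙 (ι.op ⋙ P)) _ _ ?_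
      ext c q
      refine funext fun v ↦ propext ?_
      exact ⟨fun _ ↦ ⟨_, v, q, rfl⟩, fun _ ↦ trivial⟩
    have h : (γ₂.app (op d) p : (d ⟶ d) → Prop) (𝟙 d) := by
      rw [← hγ]; exact trivial
    obtain ⟨c, u, q, hq⟩ := h
    exact ⟨c, u, q, by simpa using hq⟩
  of_map_eq {d φ} hφ {c c' u u' q q'} hq h := by
    let β : ι.op ⋙ P ⟶ ι.op ⋙ predHom d :=
      { app := fun c ↦ ↾fun q u ↦ φ c.unop u q
        naturality := fun c c' a ↦ by
          ext q
          exact funext fun u ↦ propext (hφ a.unop u q) }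
    let ψ : P ⟶ predHom d := P.descOfIsLeftKanExtension (𝟙 (ι.op ⋙ P)) _ β
    have key (c : C) (u : d ⟶ ι.obj c) (q : P.obj (op (ι.obj c))) :
        (ψ.app (op d) (P.map u.op q) : (d ⟶ d) → Prop) (𝟙 d) ↔ φ c u q := by
      have h₁ : ψ.app (op (ι.obj c)) q = β.app (op c) q :=
        ConcreteCategory.congr_hom
          (P.descOfIsLeftKanExtension_fac_app (𝟙 (ι.op ⋙ P)) _ β (op c)) q
      rw [NatTrans.naturality_apply, h₁]
      change φ c (𝟙 d ≫ u) q ↔ _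
      rw [Category.id_comp]
    rw [← key] at h ⊢
    rwa [← hq]

lemma IsExtendedFrom.isLeftKanExtension {ι : C ⥤ D} {P : Dᵒᵖ ⥤ Type v}
    (hP : IsExtendedFrom ι P) : P.IsLeftKanExtension (𝟙 (ι.op ⋙ P)) := by
  choose c u q hq using hP.exists_map_eq
  have wd (E : (ι.op).LeftExtension (ι.op ⋙ P)) {d : D} {c c' : C} {u : d ⟶ ι.obj c}
      {u' : d ⟶ ι.obj c'} {q : P.obj (op (ι.obj c))} {q' : P.obj (op (ι.obj c'))}
      (h : P.map u.op q = P.map u'.op q') :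
      E.right.map u.op (E.hom.app (op c) q) = E.right.map u'.op (E.hom.app (op c') q') := by
    refine (hP.of_map_eq (φ := fun c₁ u₁ q₁ ↦ E.right.map u.op (E.hom.app (op c) q) =
      E.right.map u₁.op (E.hom.app (op c₁) q₁)) ?_ h rfl)
    intro c₁ c₂ a u₁ q₁
    have := NatTrans.naturality_apply E.hom a.op q₁
    dsimp at this ⊢
    rw [this]
    simp
  refine ⟨⟨IsInitial.ofUniqueHom (fun E ↦ StructuredArrow.homMk
    { app := fun d ↦ ↾fun p ↦ E.right.map (u d.unop p).op (E.hom.app (op (c d.unop p)) (q d.unop p))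
      naturality := fun d d' a ↦ ?_ } ?_) ?_⟩⟩
  · ext p
    have := wd E (u := u _ (P.map a p)) (u' := a.unop ≫ u _ p) (q := q _ (P.map a p))
      (q' := q _ p) (by
        rw [hq, op_comp, Quiver.Hom.op_unop, Functor.map_comp_apply]
        exact congrArg (P.map a) (hq d.unop p).symm)
    exact this.trans (by simp)
  · ext c₀ p
    have := wd E (u := u _ p) (u' := 𝟙 (ι.obj c₀.unop)) (q := q _ p)
      (q' := p) ((hq _ p).trans (by simp))
    exact this.trans (by simp)
  · intro E m
    ext d p
    have h₁ (c₀ : C) (q₀ : P.obj (op (ι.obj c₀))) :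
        m.right.app (op (ι.obj c₀)) q₀ = E.hom.app (op c₀) q₀ :=
      ConcreteCategory.congr_hom (NatTrans.congr_app (StructuredArrow.w m) (op c₀)) q₀
    have h₂ := NatTrans.naturality_apply m.right (u d.unop p).op (q d.unop p)
    have h₃ : m.right.app d p = _ := (congrArg (m.right.app d) (hq d.unop p)).symm.trans h₂
    exact h₃.trans (congrArg _ (h₁ _ _))

section Pullback

variable {F G H : Dᵒᵖ ⥤ Type v} {f : F ⟶ G} {h : H ⟶ G}

lemma pullback_app_ext {d : Dᵒᵖ} {p p' : (pullback f h).obj d}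
    (h₁ : (pullback.fst f h).app d p = (pullback.fst f h).app d p')
    (h₂ : (pullback.snd f h).app d p = (pullback.snd f h).app d p') : p = p' :=
  Types.ext_of_isPullback
    ((IsPullback.of_hasPullback f h).map ((evaluation Dᵒᵖ (Type v)).obj d)) h₁ h₂

lemma exists_pullback_app {d : Dᵒᵖ} (x : F.obj d) (y : H.obj d) (hxy : f.app d x = h.app d y) :
    ∃ p : (pullback f h).obj d,
      (pullback.fst f h).app d p = x ∧ (pullback.snd f h).app d p = y :=
  Types.exists_of_isPullback
    ((IsPullback.of_hasPullback f h).map ((evaluation Dᵒᵖ (Type v)).obj d)) x y hxy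

lemma pullback_condition_app {d : Dᵒᵖ} (p : (pullback f h).obj d) :
    f.app d ((pullback.fst f h).app d p) = h.app d ((pullback.snd f h).app d p) :=
  ConcreteCategory.congr_hom (NatTrans.congr_app (pullback.condition (f := f) (g := h)) d) p

/-- The base change along `f` of the map `y(d) ⟶ H` classifying `y : H d`. -/
noncomputable def pullbackYonedaMap (f : F ⟶ G) (h : H ⟶ G) {d : D} (y : H.obj (op d)) :
    pullback f (yonedaEquiv.symm y ≫ h) ⟶ pullback f h :=
  pullback.lift (pullback.fst _ _) (pullback.snd _ _ ≫ yonedaEquiv.symm y)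
    (by rw [pullback.condition, Category.assoc])

lemma fst_pullbackYonedaMap {d : D} (y : H.obj (op d)) {e : Dᵒᵖ}
    (q : (pullback f (yonedaEquiv.symm y ≫ h)).obj e) :
    (pullback.fst f h).app e ((pullbackYonedaMap f h y).app e q) =
      (pullback.fst f (yonedaEquiv.symm y ≫ h)).app e q := by
  have : pullbackYonedaMap f h y ≫ pullback.fst f h = pullback.fst _ _ :=
    pullback.lift_fst _ _ _
  exact ConcreteCategory.congr_hom (NatTrans.congr_app this e) q

lemma snd_pullbackYonedaMap {d : D} (y : H.obj (op d)) {e : D}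
    (q : (pullback f (yonedaEquiv.symm y ≫ h)).obj (op e)) :
    (pullback.snd f h).app (op e) ((pullbackYonedaMap f h y).app (op e) q) =
      H.map (Quiver.Hom.op
        ((pullback.snd f (yonedaEquiv.symm y ≫ h)).app (op e) q : e ⟶ d)) y := by
  have : pullbackYonedaMap f h y ≫ pullback.snd f h =
      pullback.snd _ _ ≫ yonedaEquiv.symm y :=
    pullback.lift_snd _ _ _
  exact ConcreteCategory.congr_hom (NatTrans.congr_app this (op e)) q

/-- Elements of `F ×_G y(d)`, described through their images in `F ×_G H`. -/
lemma exists_pullbackYonedaMap_eq {d e : D} (y : H.obj (op d)) (w : e ⟶ d)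
    (p : (pullback f h).obj (op e))
    (hp : (pullback.snd f h).app (op e) p = H.map w.op y) :
    ∃ q : (pullback f (yonedaEquiv.symm y ≫ h)).obj (op e),
      (pullbackYonedaMap f h y).app (op e) q = p ∧
      (pullback.snd f (yonedaEquiv.symm y ≫ h)).app (op e) q = w := by
  obtain ⟨q, hq₁, hq₂⟩ := exists_pullback_app (f := f) (h := yonedaEquiv.symm y ≫ h)
    ((pullback.fst f h).app (op e) p) w
    ((pullback_condition_app p).trans (congrArg (h.app (op e)) hp))
  refine ⟨q, pullback_app_ext ?_ ?_, hq₂⟩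
  · rw [fst_pullbackYonedaMap, hq₁]
  · rw [snd_pullbackYonedaMap, hq₂, hp]

variable {ι : C ⥤ D}

/-- Local lifting: an element of `F ×_G H` over `d` whose `H`-component comes from `ι U` along `u`
comes from some `ι c`, compatibly with `u`. -/
lemma exists_lift_of_snd_eq
    (hF : ∀ (U : C) (σ : yoneda.obj (ι.obj U) ⟶ G), IsExtendedFrom ι (pullback f σ))
    {d : D} {U : C} (u : d ⟶ ι.obj U) (y : H.obj (op (ι.obj U)))
    (p : (pullback f h).obj (op d))
    (hp : (pullback.snd f h).app (op d) p = H.map u.op y) :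
    ∃ (c : C) (v : d ⟶ ι.obj c) (w : ι.obj c ⟶ ι.obj U) (p' : (pullback f h).obj (op (ι.obj c))),
      v ≫ w = u ∧ (pullback.snd f h).app _ p' = H.map w.op y ∧
      (pullback f h).map v.op p' = p := by
  obtain ⟨q, hq, hqu⟩ := exists_pullbackYonedaMap_eq y u p hp
  obtain ⟨c, v, q', rfl⟩ := (hF U _).exists_map_eq d q
  refine ⟨c, v, (pullback.snd f (yonedaEquiv.symm y ≫ h)).app _ q',
    (pullbackYonedaMap f h y).app _ q', ?_, snd_pullbackYonedaMap y q', ?_⟩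
  · rw [← hqu, NatTrans.naturality_apply]; rfl
  · rw [← hq, NatTrans.naturality_apply]

/-- A compatible predicate on `F ×_G H` agrees on two elements over a common `y : H (ι U)` with the
same restriction to `d`. -/
lemma IsCompatible.of_snd_eq
    (hF : ∀ (U : C) (σ : yoneda.obj (ι.obj U) ⟶ G), IsExtendedFrom ι (pullback f σ))
    {d : D} {φ : ∀ c : C, (d ⟶ ι.obj c) → (pullback f h).obj (op (ι.obj c)) → Prop}
    (hφ : IsCompatible ι (pullback f h) φ) {U : C} (y : H.obj (op (ι.obj U)))
    {c c' : C} {v : d ⟶ ι.obj c} {v' : d ⟶ ι.obj c'} {w : ι.obj c ⟶ ι.obj U}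
    {w' : ι.obj c' ⟶ ι.obj U} {p : (pullback f h).obj (op (ι.obj c))}
    {p' : (pullback f h).obj (op (ι.obj c'))} (hw : v ≫ w = v' ≫ w')
    (hp : (pullback.snd f h).app _ p = H.map w.op y)
    (hp' : (pullback.snd f h).app _ p' = H.map w'.op y)
    (hpp' : (pullback f h).map v.op p = (pullback f h).map v'.op p')
    (H₀ : φ c v p) : φ c' v' p' := by
  obtain ⟨q, rfl, hqw⟩ := exists_pullbackYonedaMap_eq y w p hp
  obtain ⟨q', rfl, hqw'⟩ := exists_pullbackYonedaMap_eq y w' p' hp'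
  refine (hF U _).of_map_eq
    (φ := fun c v q ↦ φ c v ((pullbackYonedaMap f h y).app _ q)) ?_ ?_ H₀
  · intro c c' a u q
    dsimp only
    rw [NatTrans.naturality_apply]
    exact hφ a u _
  · apply pullback_app_ext
    · rw [← fst_pullbackYonedaMap, ← fst_pullbackYonedaMap,
        NatTrans.naturality_apply (pullbackYonedaMap f h y),
        NatTrans.naturality_apply (pullbackYonedaMap f h y), hpp']
    · rw [NatTrans.naturality_apply, NatTrans.naturality_apply, hqw, hqw']
      exact hw

lemma IsExtendedFrom.pullback (hH : IsExtendedFrom ι H)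
    (hF : ∀ (U : C) (σ : yoneda.obj (ι.obj U) ⟶ G), IsExtendedFrom ι (pullback f σ)) :
    IsExtendedFrom ι (pullback f h) where
  exists_map_eq d p := by
    obtain ⟨U, u, y, hy⟩ := hH.exists_map_eq d ((pullback.snd f h).app _ p)
    obtain ⟨c, v, _, p', _, _, hp'⟩ := exists_lift_of_snd_eq hF u y p hy.symm
    exact ⟨c, v, p', hp'⟩
  of_map_eq {d φ} hφ {c c' u u' p p'} hp H₀ := by
    let φ' (U : C) (r : d ⟶ ι.obj U) (y : H.obj (op (ι.obj U))) : Prop :=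
      ∃ (c₁ : C) (v : d ⟶ ι.obj c₁) (w : ι.obj c₁ ⟶ ι.obj U)
        (p₁ : (Limits.pullback f h).obj (op (ι.obj c₁))),
        v ≫ w = r ∧ (pullback.snd f h).app _ p₁ = H.map w.op y ∧
        (Limits.pullback f h).map v.op p₁ = (Limits.pullback f h).map u.op p ∧ φ c₁ v p₁
    have hφ' : IsCompatible ι H φ' := by
      intro U U' a r y
      constructor
      · rintro ⟨c₁, v, w, p₁, rfl, hs, hr, h₁⟩
        exact ⟨c₁, v, w ≫ ι.map a, p₁, by simp, by simp [hs], hr, h₁⟩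
      · rintro ⟨c₁, v, w, p₁, hw, hs, hr, h₁⟩
        obtain ⟨c₂, v₂, w₂, p₂, hw₂, hs₂, hr₂⟩ := exists_lift_of_snd_eq hF r
          (H.map (ι.map a).op y) ((Limits.pullback f h).map u.op p) (by
            rw [← hr, NatTrans.naturality_apply, hs, ← Functor.map_comp_apply, ← op_comp, hw]
            simp)
        refine ⟨c₂, v₂, w₂, p₂, hw₂, hs₂, hr₂, ?_⟩
        exact hφ.of_snd_eq hF y (w := w) (w' := w₂ ≫ ι.map a) (by rw [hw, reassoc_of% hw₂]) hs
          (by simp [hs₂]) (hr.trans hr₂.symm) h₁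
    have hstart : φ' c u ((pullback.snd f h).app _ p) :=
      ⟨c, u, 𝟙 _, p, by simp, by simp, rfl, H₀⟩
    obtain ⟨c₁, v, w, p₁, hw, hs, hr, h₁⟩ := hH.of_map_eq hφ' (u' := u')
      (q' := (pullback.snd f h).app _ p') (by
        rw [← NatTrans.naturality_apply, ← NatTrans.naturality_apply, hp]) hstart
    exact hφ.of_snd_eq hF _ (w := w) (w' := 𝟙 _) (by simp [hw]) hs (by simp) (hr.trans hp) h₁

end Pullback

end CategoryTheory.Presheaf

/--
Let `ι : C ⥤ D` be a fully faithful functor. A presheaf `P : Dᵒᵖ ⥤ Type v` is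
"left Kan extended from `C`" if `P`, equipped with the identity natural
transformation on `ι.op ⋙ P`, is a left Kan extension of `ι.op ⋙ P` along `ι.op`.
Given natural transformations `f : F ⟶ G` and `h : H ⟶ G` of presheaves on `D`,
if `H` is left Kan extended from `C` and, for every `U : C` and every map
`σ : yoneda.obj (ι.obj U) ⟶ G`, the pullback `F ×_G y(ιU)` is left Kan extended
from `C`, then the pullback `F ×_G H` is left Kan extended from `C`.
-/
theorem pullback_isLeftKanExtension {C : Type u₁} {D : Type u₂}
    [Category.{v} C] [Category.{v} D]
    (ι : C ⥤ D) (hι : ι.FullyFaithful)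
    (F G H : Dᵒᵖ ⥤ Type v) (f : F ⟶ G) (h : H ⟶ G)
    (hH : H.IsLeftKanExtension (𝟙 (ι.op ⋙ H)))
    (hF : ∀ (U : C) (σ : yoneda.obj (ι.obj U) ⟶ G),
      (pullback f σ).IsLeftKanExtension (𝟙 (ι.op ⋙ pullback f σ))) :
    (pullback f h).IsLeftKanExtension (𝟙 (ι.op ⋙ pullback f h)) := by
  refine (Presheaf.IsExtendedFrom.pullback
    (.of_isLeftKanExtension ι H) fun U σ ↦ ?_).isLeftKanExtension
  have := hF U σ
  exact .of_isLeftKanExtension ι _
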